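/- arXiv:2511.21868 — 2 statements merged into one kernel-verified Lean document; each statement's English description precedes it below -/
import Mathlib

section
/- Let ξ ∈ (0,1] be a constant. There exist constants C₀, C₁ > 0 (depending only on ξ) such that the following holds: if G is a d-regular graph on n vertices with d = n^ξ, and G satisfies the α-bipartite density condition for some α ∈ (√d, d] with α ≤ d/(C₀·(log d)²), then the mixing time satisfies τ_{1/n}(P) ≤ C₁·(log n / log(d/α))². -/
open Finset

/-- The random-walk matrix `P = A/d` of a graph `G` (intended: `d`-regular). -/
noncomputable def walkMatrix {n : ℕ} (G : SimpleGraph (Fin n)) [DecidableRel G.Adj]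
    (d : ℕ) : Matrix (Fin n) (Fin n) ℝ :=
  (d : ℝ)⁻¹ • G.adjMatrix ℝ

/-- `p` is a probability distribution on `Fin n`. -/
def IsProbDist {n : ℕ} (p : Fin n → ℝ) : Prop :=
  (∀ v, 0 ≤ p v) ∧ ∑ v, p v = 1

/-- Total variation distance of `p` from the uniform distribution on `Fin n`. -/
noncomputable def tvFromUniform {n : ℕ} (p : Fin n → ℝ) : ℝ :=
  (1 / 2) * ∑ v, |p v - 1 / (n : ℝ)|

/-- `d_TV(t)`: worst-case total variation distance from uniform after `t` steps
of the random walk. -/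
noncomputable def dTV {n : ℕ} (G : SimpleGraph (Fin n)) [DecidableRel G.Adj]
    (d t : ℕ) : ℝ :=
  sSup {x : ℝ | ∃ p : Fin n → ℝ, IsProbDist p ∧
    x = tvFromUniform ((walkMatrix G d ^ t).mulVec p)}

/-- The `ε`-mixing time `τ_ε(P)`. -/
noncomputable def mixingTime {n : ℕ} (G : SimpleGraph (Fin n)) [DecidableRel G.Adj]
    (d : ℕ) (ε : ℝ) : ℕ :=
  sInf {t : ℕ | dTV G d t ≤ ε}

/-- `|E(S,T)|`: the number of ordered edges `(u,v)` with `u ∈ S`, `v ∈ T`, `uv ∈ E`. -/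
def bipCount {n : ℕ} (G : SimpleGraph (Fin n)) [DecidableRel G.Adj]
    (S T : Finset (Fin n)) : ℕ :=
  ((S ×ˢ T).filter (fun e => G.Adj e.1 e.2)).card

/-- The `α`-bipartite density condition. -/
def BipDensity {n : ℕ} (G : SimpleGraph (Fin n)) [DecidableRel G.Adj]
    (d : ℕ) (α : ℝ) : Prop :=
  ∀ S T : Finset (Fin n),
    (bipCount G S T : ℝ) ≤ d * S.card * T.card / n + α * Real.sqrt (S.card * T.card)

/-- The `δ`-small-set `α`-bipartite density condition. -/
def SmallSetBipDensity {n : ℕ} (G : SimpleGraph (Fin n)) [DecidableRel G.Adj]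
    (d : ℕ) (α δ : ℝ) : Prop :=
  ∀ S T : Finset (Fin n), (S.card : ℝ) ≤ δ * n → (T.card : ℝ) ≤ δ * n →
    (bipCount G S T : ℝ) ≤ d * S.card * T.card / n + α * Real.sqrt (S.card * T.card)

/-- Abel summation against the weights `√(k + 1)`. -/
lemma sum_range_sub_mul_sqrt (a : ℕ → ℝ) (m : ℕ) :
    ∑ k ∈ range m, (a k - a (k + 1)) * √((k : ℝ) + 1) =
      ∑ k ∈ range m, a k * (√((k : ℝ) + 1) - √(k : ℝ)) - a m * √(m : ℝ) := by
  induction m with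
  | zero => simp
  | succ m ih =>
    rw [sum_range_succ, sum_range_succ, ih]
    push_cast
    ring

/-- The increment of the square root is at most the inverse square root. -/
lemma sqrt_succ_sub_sqrt_le (k : ℕ) :
    √((k : ℝ) + 1) - √(k : ℝ) ≤ 1 / √((k : ℝ) + 1) := by
  have hp : 0 < √((k : ℝ) + 1) := Real.sqrt_pos.2 (by positivity)
  rw [le_div_iff₀ hp]
  have h1 : √((k : ℝ) + 1) ^ 2 = (k : ℝ) + 1 := Real.sq_sqrt (by positivity)
  have h2 : √(k : ℝ) ^ 2 = (k : ℝ) := Real.sq_sqrt (by positivity)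
  have h3 : √(k : ℝ) ≤ √((k : ℝ) + 1) := Real.sqrt_le_sqrt (by linarith)
  nlinarith [Real.sqrt_nonneg (k : ℝ)]

/-- The Lorentz `ℓ^{2,1}` norm of a decreasing sequence is at most `√(1 + log n)` times its
`ℓ²` norm. -/
lemma sum_range_sub_mul_sqrt_le {n : ℕ} {a : ℕ → ℝ} (ha : ∀ k, 0 ≤ a k) :
    ∑ k ∈ range n, (a k - a (k + 1)) * √((k : ℝ) + 1) ≤
      √(1 + Real.log n) * √(∑ k ∈ range n, a k ^ 2) := by
  rw [sum_range_sub_mul_sqrt]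
  have h1 : ∑ k ∈ range n, a k * (√((k : ℝ) + 1) - √(k : ℝ)) ≤
      ∑ k ∈ range n, (1 / √((k : ℝ) + 1)) * a k :=
    sum_le_sum fun k _ => by
      rw [mul_comm]
      exact mul_le_mul_of_nonneg_right (sqrt_succ_sub_sqrt_le k) (ha k)
  have h2 := Real.sum_mul_le_sqrt_mul_sqrt (range n) (fun k => 1 / √((k : ℝ) + 1)) a
  have h3 : ∑ k ∈ range n, (1 / √((k : ℝ) + 1)) ^ 2 ≤ 1 + Real.log n := by
    refine le_trans (le_of_eq ?_) (harmonic_le_one_add_log n)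
    rw [harmonic, Rat.cast_sum]
    refine sum_congr rfl fun k _ => ?_
    rw [div_pow, Real.sq_sqrt (by positivity)]
    simp
  have h4 := mul_le_mul_of_nonneg_right (Real.sqrt_le_sqrt h3)
    (Real.sqrt_nonneg (∑ k ∈ range n, a k ^ 2))
  have h5 : 0 ≤ a n * √(n : ℝ) := mul_nonneg (ha n) (Real.sqrt_nonneg _)
  linarith

/-- Layer-cake decomposition of a nonnegative vector into indicators of nested sets. -/
lemma exists_layer_decomposition {n : ℕ} (f : Fin n → ℝ) (hf : ∀ i, 0 ≤ f i) :
    ∃ (c : ℕ → ℝ) (S : ℕ → Finset (Fin n)), (∀ k, 0 ≤ c k) ∧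
      (∀ i, f i = ∑ k ∈ range n, if i ∈ S k then c k else 0) ∧
      ∑ k ∈ range n, c k * √((S k).card : ℝ) ≤
        √(1 + Real.log n) * √(∑ i, f i ^ 2) := by
  obtain ⟨σ, hσ⟩ : ∃ σ : Equiv.Perm (Fin n), Antitone (f ∘ σ) :=
    ⟨Tuple.sort fun i => -f i, fun i j hij => by
      simpa using Tuple.monotone_sort (fun i => -f i) hij⟩
  set a : ℕ → ℝ := fun k => if h : k < n then f (σ ⟨k, h⟩) else 0 with ha
  have ha0 : ∀ k, 0 ≤ a k := fun k => by
    simp only [ha]; split_ifs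
    exacts [hf _, le_rfl]
  have hanti : ∀ k, a (k + 1) ≤ a k := fun k => by
    by_cases h : k + 1 < n
    · have h' : k < n := by omega
      simp only [ha, h, h', dif_pos]
      exact hσ (show (⟨k, h'⟩ : Fin n) ≤ ⟨k + 1, h⟩ by simp [Fin.le_def])
    · have : a (k + 1) = 0 := by simp [ha, h]
      rw [this]; exact ha0 k
  have han : a n = 0 := by simp [ha]
  have hsum : ∑ k ∈ range n, a k ^ 2 = ∑ i, f i ^ 2 := by
    rw [← Fin.sum_univ_eq_sum_range (fun k => a k ^ 2), ← Equiv.sum_comp σ (fun i => f i ^ 2)]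
    exact sum_congr rfl fun i _ => by simp [ha]
  refine ⟨fun k => a k - a (k + 1), fun k => univ.filter fun i => (σ.symm i : ℕ) ≤ k,
    fun k => sub_nonneg.2 (hanti k), fun i => ?_, ?_⟩
  · have key : ∀ m j : ℕ, j ≤ m →
        ∑ k ∈ range m, (if j ≤ k then a k - a (k + 1) else 0) = a j - a m := by
      intro m j hjm
      induction m, hjm using Nat.le_induction with
      | base =>
        rw [sub_self]
        exact sum_eq_zero fun k hk => if_neg (by simpa using hk)
      | succ m hm ih => rw [sum_range_succ, ih, if_pos hm]; ring
    have := key n (σ.symm i) (σ.symm i).2.le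
    simp only [mem_filter, mem_univ, true_and]
    rw [this, han]
    simp [ha]
  · rw [← hsum]
    refine le_trans (le_of_eq (sum_congr rfl fun k hk => ?_)) (sum_range_sub_mul_sqrt_le ha0)
    have hk' : k < n := by simpa using hk
    have : (univ.filter fun i => (σ.symm i : ℕ) ≤ k).card = k + 1 := by
      have h1 : (univ.filter fun i => (σ.symm i : ℕ) ≤ k) =
          (Finset.Iic (⟨k, hk'⟩ : Fin n)).map σ.toEmbedding := by
        ext i
        simp [Fin.le_def, Finset.mem_map_equiv]
      rw [h1, card_map, Fin.card_Iic]
    rw [this]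
    push_cast
    rfl

/-- A discrepancy bound on all pairs of sets bounds the bilinear form on nonnegative vectors. -/
lemma abs_bilin_le_of_nonneg {n : ℕ} {M : Matrix (Fin n) (Fin n) ℝ} {β : ℝ} (hβ : 0 ≤ β)
    (hM : ∀ S T : Finset (Fin n),
      |∑ i ∈ S, ∑ j ∈ T, M i j| ≤ β * (√(S.card : ℝ) * √(T.card : ℝ)))
    {f g : Fin n → ℝ} (hf : ∀ i, 0 ≤ f i) (hg : ∀ i, 0 ≤ g i) :
    |∑ i, ∑ j, f i * M i j * g j| ≤
      β * (1 + Real.log n) * (√(∑ i, f i ^ 2) * √(∑ i, g i ^ 2)) := by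
  obtain ⟨c, S, hc, hcf, hcs⟩ := exists_layer_decomposition f hf
  obtain ⟨e, T, he, heg, hes⟩ := exists_layer_decomposition g hg
  have hexp : ∑ i, ∑ j, f i * M i j * g j =
      ∑ k ∈ range n, ∑ l ∈ range n, c k * e l * ∑ i ∈ S k, ∑ j ∈ T l, M i j := by
    have h1 : ∀ i j, f i * M i j * g j = ∑ k ∈ range n, ∑ l ∈ range n,
        if i ∈ S k then (if j ∈ T l then c k * e l * M i j else 0) else 0 := by
      intro i j
      rw [hcf i, heg j, sum_mul, sum_mul_sum]
      refine sum_congr rfl fun k _ => sum_congr rfl fun l _ => ?_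
      split_ifs <;> ring
    have h2 : ∀ k l, c k * e l * ∑ i ∈ S k, ∑ j ∈ T l, M i j =
        ∑ i, ∑ j, if i ∈ S k then (if j ∈ T l then c k * e l * M i j else 0) else 0 := by
      intro k l
      simp only [mul_sum]
      have h3 : ∀ i, (∑ j, if i ∈ S k then (if j ∈ T l then c k * e l * M i j else 0) else 0) =
          if i ∈ S k then ∑ j ∈ T l, c k * e l * M i j else 0 := fun i => by
        split_ifs <;> simp
      simp [h3]
    simp_rw [h1, h2]
    calc _ = ∑ i, ∑ k ∈ range n, ∑ j, ∑ l ∈ range n,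
          (if i ∈ S k then (if j ∈ T l then c k * e l * M i j else 0) else 0) :=
          sum_congr rfl fun i _ => sum_comm
      _ = ∑ k ∈ range n, ∑ i, ∑ j, ∑ l ∈ range n,
          (if i ∈ S k then (if j ∈ T l then c k * e l * M i j else 0) else 0) := sum_comm
      _ = ∑ k ∈ range n, ∑ i, ∑ l ∈ range n, ∑ j,
          (if i ∈ S k then (if j ∈ T l then c k * e l * M i j else 0) else 0) :=
          sum_congr rfl fun k _ => sum_congr rfl fun i _ => sum_comm
      _ = _ := sum_congr rfl fun k _ => sum_comm
  have hlog : 0 ≤ 1 + Real.log n := add_nonneg zero_le_one (Real.log_natCast_nonneg n)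
  calc |∑ i, ∑ j, f i * M i j * g j|
      ≤ ∑ k ∈ range n, ∑ l ∈ range n,
          c k * e l * (β * (√((S k).card : ℝ) * √((T l).card : ℝ))) := by
        rw [hexp]
        refine (abs_sum_le_sum_abs _ _).trans (sum_le_sum fun k _ =>
          (abs_sum_le_sum_abs _ _).trans (sum_le_sum fun l _ => ?_))
        have h := mul_nonneg (hc k) (he l)
        rw [abs_mul, abs_of_nonneg h]
        exact mul_le_mul_of_nonneg_left (hM _ _) h
    _ = β * ((∑ k ∈ range n, c k * √((S k).card : ℝ)) *
          ∑ l ∈ range n, e l * √((T l).card : ℝ)) := by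
        rw [sum_mul_sum, mul_sum]
        refine sum_congr rfl fun k _ => ?_
        rw [mul_sum]
        exact sum_congr rfl fun l _ => by ring
    _ ≤ β * ((√(1 + Real.log n) * √(∑ i, f i ^ 2)) *
          (√(1 + Real.log n) * √(∑ i, g i ^ 2))) := by
        refine mul_le_mul_of_nonneg_left (mul_le_mul hcs hes ?_ (by positivity)) hβ
        exact sum_nonneg fun l _ => mul_nonneg (he l) (Real.sqrt_nonneg _)
    _ = β * (√(1 + Real.log n) * √(1 + Real.log n)) *
          (√(∑ i, f i ^ 2) * √(∑ i, g i ^ 2)) := by ring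
    _ = _ := by rw [Real.mul_self_sqrt hlog]

/-- A discrepancy bound on all pairs of sets bounds the bilinear form. -/
lemma abs_bilin_le {n : ℕ} {M : Matrix (Fin n) (Fin n) ℝ} {β : ℝ} (hβ : 0 ≤ β)
    (hM : ∀ S T : Finset (Fin n),
      |∑ i ∈ S, ∑ j ∈ T, M i j| ≤ β * (√(S.card : ℝ) * √(T.card : ℝ)))
    (f g : Fin n → ℝ) :
    |∑ i, ∑ j, f i * M i j * g j| ≤
      4 * (β * (1 + Real.log n)) * (√(∑ i, f i ^ 2) * √(∑ i, g i ^ 2)) := by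
  have hlog : 0 ≤ 1 + Real.log n := add_nonneg zero_le_one (Real.log_natCast_nonneg n)
  have hnorm : ∀ h h' : Fin n → ℝ, (∀ i, |h' i| ≤ |h i|) →
      √(∑ i, h' i ^ 2) ≤ √(∑ i, h i ^ 2) := fun h h' hh =>
    Real.sqrt_le_sqrt (sum_le_sum fun i _ => sq_le_sq.2 (hh i))
  have hpos : ∀ x : ℝ, |max x 0| ≤ |x| := fun x => by
    rw [abs_of_nonneg (le_max_right _ _)]
    exact max_le (le_abs_self x) (abs_nonneg x)
  have hneg : ∀ x : ℝ, |max (-x) 0| ≤ |x| := fun x => by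
    simpa using hpos (-x)
  have hsplit : ∀ x : ℝ, x = max x 0 - max (-x) 0 := fun x => by
    rcases le_total 0 x with h | h <;> simp [h]
  have key : ∀ f' g' : Fin n → ℝ, (∀ i, 0 ≤ f' i) → (∀ i, 0 ≤ g' i) →
      (∀ i, |f' i| ≤ |f i|) → (∀ i, |g' i| ≤ |g i|) →
      |∑ i, ∑ j, f' i * M i j * g' j| ≤
        β * (1 + Real.log n) * (√(∑ i, f i ^ 2) * √(∑ i, g i ^ 2)) := by
    intro f' g' hf hg hf' hg'
    refine (abs_bilin_le_of_nonneg hβ hM hf hg).trans ?_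
    have h1 := hnorm f f' hf'
    have h2 := hnorm g g' hg'
    gcongr
  have hexp : ∑ i, ∑ j, f i * M i j * g j =
      ∑ i, ∑ j, max (f i) 0 * M i j * max (g j) 0
      - ∑ i, ∑ j, max (f i) 0 * M i j * max (-g j) 0
      - ∑ i, ∑ j, max (-f i) 0 * M i j * max (g j) 0
      + ∑ i, ∑ j, max (-f i) 0 * M i j * max (-g j) 0 := by
    simp only [← sum_sub_distrib, ← sum_add_distrib]
    refine sum_congr rfl fun i _ => sum_congr rfl fun j _ => ?_
    conv_lhs => rw [hsplit (f i), hsplit (g j)]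
    ring
  have k1 := abs_le.1 (key (fun i => max (f i) 0) (fun i => max (g i) 0)
    (fun _ => le_max_right _ _) (fun _ => le_max_right _ _) (fun _ => hpos _) (fun _ => hpos _))
  have k2 := abs_le.1 (key (fun i => max (f i) 0) (fun i => max (-g i) 0)
    (fun _ => le_max_right _ _) (fun _ => le_max_right _ _) (fun _ => hpos _) (fun _ => hneg _))
  have k3 := abs_le.1 (key (fun i => max (-f i) 0) (fun i => max (g i) 0)
    (fun _ => le_max_right _ _) (fun _ => le_max_right _ _) (fun _ => hneg _) (fun _ => hpos _))
  have k4 := abs_le.1 (key (fun i => max (-f i) 0) (fun i => max (-g i) 0)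
    (fun _ => le_max_right _ _) (fun _ => le_max_right _ _) (fun _ => hneg _) (fun _ => hneg _))
  rw [hexp, abs_le]
  constructor <;> linarith [k1.1, k1.2, k2.1, k2.2, k3.1, k3.2, k4.1, k4.2]

/-- A discrepancy bound on all pairs of sets bounds the `ℓ²` operator norm. -/
lemma sqrt_sum_sq_mulVec_le {n : ℕ} {M : Matrix (Fin n) (Fin n) ℝ} {β : ℝ} (hβ : 0 ≤ β)
    (hM : ∀ S T : Finset (Fin n),
      |∑ i ∈ S, ∑ j ∈ T, M i j| ≤ β * (√(S.card : ℝ) * √(T.card : ℝ)))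
    (g : Fin n → ℝ) :
    √(∑ i, M.mulVec g i ^ 2) ≤ 4 * (β * (1 + Real.log n)) * √(∑ i, g i ^ 2) := by
  have h := (le_abs_self _).trans (abs_bilin_le hβ hM (M.mulVec g) g)
  have h1 : ∑ i, ∑ j, M.mulVec g i * M i j * g j = ∑ i, M.mulVec g i ^ 2 := by
    refine sum_congr rfl fun i _ => ?_
    rw [sq]
    conv_rhs => rw [Matrix.mulVec, dotProduct, mul_sum]
    exact sum_congr rfl fun j _ => by rw [Matrix.mulVec, dotProduct, mul_assoc]
  rw [h1] at h
  rcases (Real.sqrt_nonneg (∑ i, M.mulVec g i ^ 2)).eq_or_lt with h0 | h0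
  · rw [← h0]
    have := Real.log_natCast_nonneg n
    positivity
  · have h2 := Real.mul_self_sqrt (sum_nonneg fun i (_ : i ∈ univ) => sq_nonneg (M.mulVec g i))
    refine le_of_mul_le_mul_right ?_ h0
    linarith

/-- One-sided bipartite density of a regular graph gives two-sided discrepancy, with
`α = d y⁶` replaced by `d y⁴`. -/
lemma abs_discrepancy_le {n d : ℕ} {G : SimpleGraph (Fin n)} [DecidableRel G.Adj]
    (hG : G.IsRegularOfDegree d) (hn : 0 < n) {y : ℝ} (hy0 : 0 < y) (hy1 : y ≤ 1)
    (hB : BipDensity G d (d * y ^ 6)) (S T : Finset (Fin n)) :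
    |∑ i ∈ S, ∑ j ∈ T, (G.adjMatrix ℝ i j - d / n)| ≤
      d * y ^ 4 * (√(S.card : ℝ) * √(T.card : ℝ)) := by
  have hn' : (0 : ℝ) < n := by exact_mod_cast hn
  have hcount : ∀ S T : Finset (Fin n), ∑ i ∈ S, ∑ j ∈ T, (G.adjMatrix ℝ i j - d / n) =
      bipCount G S T - d * S.card * T.card / n := by
    intro S T
    rw [bipCount, card_filter, sum_product]
    push_cast
    simp only [SimpleGraph.adjMatrix_apply, sum_sub_distrib, sum_const, nsmul_eq_mul]
    ring
  have hup : ∀ S T : Finset (Fin n), ∑ i ∈ S, ∑ j ∈ T, (G.adjMatrix ℝ i j - d / n) ≤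
      d * y ^ 6 * (√(S.card : ℝ) * √(T.card : ℝ)) := by
    intro S T
    have := hB S T
    rw [Real.sqrt_mul (by positivity)] at this
    rw [hcount]; linarith
  have hrow : ∀ i, ∑ j, (G.adjMatrix ℝ i j - d / n) = 0 := by
    intro i
    have : (G.degree i : ℝ) = d := by exact_mod_cast hG i
    simp only [SimpleGraph.adjMatrix_apply, sum_sub_distrib, sum_const, nsmul_eq_mul,
      sum_boole, card_univ, Fintype.card_fin, ← SimpleGraph.neighborFinset_eq_filter,
      SimpleGraph.card_neighborFinset_eq_degree, this]
    field_simp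
    ring
  have hswap : ∀ S T : Finset (Fin n), ∑ i ∈ S, ∑ j ∈ T, (G.adjMatrix ℝ i j - d / n) =
      ∑ i ∈ T, ∑ j ∈ S, (G.adjMatrix ℝ i j - d / n) := by
    intro S T
    rw [sum_comm]
    refine sum_congr rfl fun i _ => sum_congr rfl fun j _ => ?_
    simp only [SimpleGraph.adjMatrix_apply, G.adj_comm]
  have hcompl : ∀ S T : Finset (Fin n), y ^ 4 * n ≤ T.card →
      -(d * y ^ 4 * (√(S.card : ℝ) * √(T.card : ℝ))) ≤
        ∑ i ∈ S, ∑ j ∈ T, (G.adjMatrix ℝ i j - d / n) := by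
    intro S T hT
    have h1 : ∑ i ∈ S, ∑ j ∈ T, (G.adjMatrix ℝ i j - d / n) =
        -∑ i ∈ S, ∑ j ∈ Tᶜ, (G.adjMatrix ℝ i j - d / n) := by
      rw [eq_neg_iff_add_eq_zero, ← sum_add_distrib]
      exact sum_eq_zero fun i _ => by rw [sum_add_sum_compl, hrow]
    rw [h1, neg_le_neg_iff]
    refine (hup S Tᶜ).trans ?_
    have h2 : y ^ 2 * √((Tᶜ).card : ℝ) ≤ √(T.card : ℝ) := by
      refine Real.le_sqrt_of_sq_le ?_
      rw [mul_pow, Real.sq_sqrt (by positivity)]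
      refine le_trans ?_ hT
      rw [← pow_mul]
      have : ((Tᶜ).card : ℝ) ≤ n := by
        exact_mod_cast (card_le_univ _).trans_eq (Fintype.card_fin n)
      gcongr
    calc d * y ^ 6 * (√(S.card : ℝ) * √((Tᶜ).card : ℝ))
        = d * y ^ 4 * (√(S.card : ℝ) * (y ^ 2 * √((Tᶜ).card : ℝ))) := by ring
      _ ≤ _ := by gcongr
  refine abs_le.2 ⟨?_, (hup S T).trans ?_⟩
  · by_cases hT : y ^ 4 * n ≤ T.card
    · exact hcompl S T hT
    by_cases hS : y ^ 4 * n ≤ S.card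
    · rw [hswap, mul_comm √(S.card : ℝ)]
      exact hcompl T S hS
    push Not at hS hT
    rw [hcount]
    have h1 : √(S.card : ℝ) * √(T.card : ℝ) ≤ y ^ 4 * n := by
      rw [← Real.sqrt_mul (by positivity)]
      refine Real.sqrt_le_iff.2 ⟨by positivity, ?_⟩
      rw [sq]
      gcongr
    have h2 : d * S.card * T.card / n =
        d * (√(S.card : ℝ) * √(T.card : ℝ)) * (√(S.card : ℝ) * √(T.card : ℝ)) / n := by
      have hs := Real.mul_self_sqrt (Nat.cast_nonneg (α := ℝ) S.card)
      have ht := Real.mul_self_sqrt (Nat.cast_nonneg (α := ℝ) T.card)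
      conv_lhs => rw [← hs, ← ht]
      ring
    have h3 : d * S.card * T.card / n ≤ d * y ^ 4 * (√(S.card : ℝ) * √(T.card : ℝ)) := by
      rw [h2, div_le_iff₀ hn']
      calc _ ≤ d * (√(S.card : ℝ) * √(T.card : ℝ)) * (y ^ 4 * n) := by gcongr
        _ = _ := by ring
    have h4 : (0 : ℝ) ≤ bipCount G S T := Nat.cast_nonneg _
    linarith
  · have : y ^ 6 ≤ y ^ 4 := pow_le_pow_of_le_one hy0.le hy1 (by norm_num)
    gcongr

/-- One step of the walk preserves zero-sum vectors, and an `ℓ²` bound on the centred adjacency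
matrix makes the walk contract them. -/
lemma walkMatrix_pow_mulVec_bound {n d : ℕ} {G : SimpleGraph (Fin n)} [DecidableRel G.Adj]
    (hG : G.IsRegularOfDegree d) (hd : 0 < d) {ρ : ℝ} (hρ : 0 ≤ ρ)
    (hM : ∀ g : Fin n → ℝ, √(∑ i, (Matrix.of fun i j => G.adjMatrix ℝ i j - d / n).mulVec g i ^ 2)
      ≤ d * ρ * √(∑ i, g i ^ 2))
    (q : Fin n → ℝ) (hq : ∑ i, q i = 0) (t : ℕ) :
    ∑ i, (walkMatrix G d ^ t).mulVec q i = 0 ∧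
      √(∑ i, (walkMatrix G d ^ t).mulVec q i ^ 2) ≤ ρ ^ t * √(∑ i, q i ^ 2) := by
  have hd' : (0 : ℝ) < d := by exact_mod_cast hd
  induction t with
  | zero => simpa using hq
  | succ t ih =>
    obtain ⟨ih1, ih2⟩ := ih
    rw [pow_succ', ← Matrix.mulVec_mulVec]
    set r := (walkMatrix G d ^ t).mulVec q
    have hstep : ∀ i, (walkMatrix G d).mulVec r i =
        (d : ℝ)⁻¹ * (Matrix.of fun i j => G.adjMatrix ℝ i j - d / n).mulVec r i := by
      intro i
      rw [walkMatrix, Matrix.smul_mulVec]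
      simp only [Pi.smul_apply, smul_eq_mul, Matrix.mulVec, dotProduct, Matrix.of_apply, sub_mul,
        sum_sub_distrib, ← mul_sum, ih1, mul_zero, sub_zero]
    constructor
    · have hcol : ∀ j, ∑ i, G.adjMatrix ℝ i j = d := by
        intro j
        have : (G.degree j : ℝ) = d := by exact_mod_cast hG j
        simp only [SimpleGraph.adjMatrix_apply, G.adj_comm _ j, sum_boole,
          ← SimpleGraph.neighborFinset_eq_filter, SimpleGraph.card_neighborFinset_eq_degree, this]
      simp only [walkMatrix, Matrix.smul_mulVec, Pi.smul_apply, smul_eq_mul, ← mul_sum]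
      simp only [Matrix.mulVec, dotProduct]
      rw [sum_comm]
      simp only [← sum_mul, hcol, ← mul_sum, ih1, mul_zero]
    · simp only [hstep, mul_pow, ← mul_sum]
      rw [Real.sqrt_mul (by positivity), Real.sqrt_sq (by positivity), inv_mul_le_iff₀ hd']
      refine (hM r).trans ?_
      calc d * ρ * √(∑ i, r i ^ 2) ≤ d * ρ * (ρ ^ t * √(∑ i, q i ^ 2)) := by gcongr
        _ = _ := by ring

/-- An `ℓ²` contraction rate for zero-sum vectors bounds the total variation distance. -/
lemma dTV_le {n d : ℕ} {G : SimpleGraph (Fin n)} [DecidableRel G.Adj]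
    (hG : G.IsRegularOfDegree d) (hn : 0 < n) (hd : 0 < d) {ρ : ℝ} (hρ : 0 ≤ ρ)
    (hM : ∀ g : Fin n → ℝ, √(∑ i, (Matrix.of fun i j => G.adjMatrix ℝ i j - d / n).mulVec g i ^ 2)
      ≤ d * ρ * √(∑ i, g i ^ 2)) (t : ℕ) :
    dTV G d t ≤ √n * ρ ^ t := by
  have hn' : (0 : ℝ) < n := by exact_mod_cast hn
  have hd' : (0 : ℝ) < d := by exact_mod_cast hd
  refine Real.sSup_le ?_ (by positivity)
  rintro x ⟨p, ⟨hp0, hp1⟩, rfl⟩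
  have hfix : ∀ t : ℕ, (walkMatrix G d ^ t).mulVec (fun _ => 1 / (n : ℝ)) =
      fun _ => 1 / (n : ℝ) := by
    intro t
    induction t with
    | zero => simp
    | succ t ih =>
      rw [pow_succ', ← Matrix.mulVec_mulVec, ih]
      ext i
      have : (G.degree i : ℝ) = d := by exact_mod_cast hG i
      simp only [walkMatrix, Matrix.smul_mulVec, Pi.smul_apply, smul_eq_mul]
      simp only [Matrix.mulVec, dotProduct, ← sum_mul, SimpleGraph.adjMatrix_apply, sum_boole,
        ← SimpleGraph.neighborFinset_eq_filter, SimpleGraph.card_neighborFinset_eq_degree, this]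
      field_simp
  set q : Fin n → ℝ := fun i => p i - 1 / (n : ℝ) with hq
  have hq0 : ∑ i, q i = 0 := by
    simp only [hq, sum_sub_distrib, hp1, sum_const, card_univ, Fintype.card_fin, nsmul_eq_mul]
    field_simp
    ring
  have hqn : ∑ i, q i ^ 2 ≤ 1 := by
    have h1 : ∑ i, p i ^ 2 ≤ 1 := by
      rw [← hp1]
      refine sum_le_sum fun i _ => ?_
      have : p i ≤ 1 := hp1 ▸ single_le_sum (fun j _ => hp0 j) (mem_univ i)
      nlinarith [hp0 i]
    have h2 : ∑ i, q i ^ 2 = ∑ i, p i ^ 2 - 1 / n := by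
      have h3 : ∀ i, q i ^ 2 = p i ^ 2 - 2 / n * p i + 1 / (n : ℝ) ^ 2 := fun i => by
        simp only [hq]; ring
      simp only [h3, sum_add_distrib, sum_sub_distrib, ← mul_sum, hp1, sum_const, card_univ,
        Fintype.card_fin, nsmul_eq_mul]
      field_simp
      ring
    have h4 : 0 ≤ 1 / (n : ℝ) := by positivity
    linarith
  have hpq : ∀ i, (walkMatrix G d ^ t).mulVec p i - 1 / (n : ℝ) =
      (walkMatrix G d ^ t).mulVec q i := by
    intro i
    have : q = p - fun _ => 1 / (n : ℝ) := rfl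
    rw [this, Matrix.mulVec_sub, hfix]
    rfl
  have hb := (walkMatrix_pow_mulVec_bound hG hd hρ hM q hq0 t).2
  simp only [tvFromUniform, hpq]
  set r := (walkMatrix G d ^ t).mulVec q
  have hcs := Real.sum_mul_le_sqrt_mul_sqrt univ (fun _ : Fin n => (1 : ℝ)) (fun i => |r i|)
  simp only [one_mul, sq_abs, one_pow, sum_const, card_univ, Fintype.card_fin, nsmul_eq_mul,
    mul_one] at hcs
  have hr : √(∑ i, r i ^ 2) ≤ ρ ^ t := by
    refine hb.trans (mul_le_of_le_one_right (by positivity) ?_)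
    exact Real.sqrt_le_one.2 hqn
  have h5 : √(n : ℝ) * √(∑ i, r i ^ 2) ≤ √n * ρ ^ t := by gcongr
  have h6 : 0 ≤ ∑ i, |r i| := sum_nonneg fun _ _ => abs_nonneg _
  linarith

/-- bipartite density implies `τ_{1/n}(P) ≲ (log n / log(d/α))²`. -/
theorem mixing_time_upper_bound_of_bipartite_density (ξ : ℝ) (hξ0 : 0 < ξ) (hξ1 : ξ ≤ 1) :
    ∃ C₀ C₁ : ℝ, 0 < C₀ ∧ 0 < C₁ ∧
      ∀ (n d : ℕ) (G : SimpleGraph (Fin n)) [DecidableRel G.Adj] (α : ℝ),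
        G.IsRegularOfDegree d →
        (d : ℝ) = (n : ℝ) ^ ξ →
        Real.sqrt d < α → α ≤ d →
        α ≤ d / (C₀ * Real.log d ^ 2) →
        BipDensity G d α →
        (mixingTime G d (1 / n) : ℝ) ≤ C₁ * (Real.log n / Real.log (d / α)) ^ 2 := by
  refine ⟨144 / ξ ^ 2, 10, by positivity, by norm_num, ?_⟩
  intro n d G _ α hG hdn hα1 hα2 hα3 hB
  have hα0 : 0 < α := (Real.sqrt_nonneg _).trans_lt hα1
  have hd' : (0 : ℝ) < d := hα0.trans_le hα2
  have hd : 0 < d := by exact_mod_cast hd'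
  have hn : 2 ≤ n := by
    have hn0 : n ≠ 0 := by
      rintro rfl
      rw [Nat.cast_zero, Real.zero_rpow hξ0.ne'] at hdn
      exact hd'.ne' hdn
    have : G.degree ⟨0, by omega⟩ < n := by
      simpa using G.degree_lt_card_verts ⟨0, by omega⟩
    rw [hG] at this
    omega
  have hn' : (2 : ℝ) ≤ n := by exact_mod_cast hn
  have hn0 : (0 : ℝ) < n := by linarith
  have hlogn : 1 / 2 < Real.log n := by
    have := Real.log_le_log (by norm_num) hn'
    linarith [Real.log_two_gt_d9]
  have hlogd : Real.log d = ξ * Real.log n := by rw [hdn, Real.log_rpow hn0]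
  have hC : 144 / ξ ^ 2 * Real.log d ^ 2 = (12 * Real.log n) ^ 2 := by
    rw [hlogd]; field_simp; ring
  rw [hC, le_div_iff₀ (by positivity)] at hα3
  set y : ℝ := (α / d) ^ ((1 : ℝ) / 6) with hy
  have hx0 : 0 < α / d := by positivity
  have hy0 : 0 < y := Real.rpow_pos_of_pos hx0 _
  have hy6 : y ^ 6 = α / d := by
    rw [hy, ← Real.rpow_natCast, ← Real.rpow_mul hx0.le]
    norm_num
  have hαy : α = d * y ^ 6 := by rw [hy6]; field_simp
  have hy3 : y ^ 3 * (12 * Real.log n) ≤ 1 := by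
    have h1 : (y ^ 3 * (12 * Real.log n)) ^ 2 ≤ 1 := by
      rw [mul_pow, ← pow_mul, hy6, div_mul_eq_mul_div, div_le_one hd']
      exact hα3
    exact (sq_le_one_iff₀ (by positivity)).1 h1
  have hy1 : y < 1 := by
    by_contra! h
    have : 1 ≤ y ^ 3 := one_le_pow₀ h
    nlinarith
  rw [hαy] at hB
  have hM : ∀ g : Fin n → ℝ,
      √(∑ i, (Matrix.of fun i j => G.adjMatrix ℝ i j - d / n).mulVec g i ^ 2)
        ≤ d * y * √(∑ i, g i ^ 2) := by
    intro g
    refine (sqrt_sum_sq_mulVec_le (β := d * y ^ 4) (by positivity)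
      (fun S T => abs_discrepancy_le hG (by omega) hy0 hy1.le hB S T) g).trans ?_
    refine mul_le_mul_of_nonneg_right ?_ (Real.sqrt_nonneg _)
    have h1 : y ^ 3 * (4 * (1 + Real.log n)) ≤ 1 := by
      refine le_trans (mul_le_mul_of_nonneg_left ?_ (by positivity)) hy3
      linarith
    calc 4 * (d * y ^ 4 * (1 + Real.log n)) = d * y * (y ^ 3 * (4 * (1 + Real.log n))) := by ring
      _ ≤ d * y * 1 := by gcongr
      _ = d * y := mul_one _
  have hlogy : Real.log (d / α) = -(6 * Real.log y) := by
    rw [← inv_div, Real.log_inv, ← hy6, Real.log_pow]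
    norm_num
  have hly : Real.log y < 0 := Real.log_neg hy0 hy1
  have hL0 : 0 < Real.log (d / α) := by linarith
  set L := Real.log n / Real.log (d / α) with hL
  have hL1 : 1 ≤ L := by
    rw [hL, one_le_div hL0]
    refine Real.log_le_log (by positivity) ?_
    have hdle : (d : ℝ) ≤ n := by
      rw [hdn]
      exact (Real.rpow_le_rpow_of_exponent_le (by linarith) hξ1).trans_eq (Real.rpow_one _)
    have hα1' : 1 ≤ α := by
      refine le_trans ?_ hα1.le
      exact Real.one_le_sqrt.2 (by exact_mod_cast hd)
    exact (div_le_self hd'.le hα1').trans hdle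
  have ht : dTV G d ⌈9 * L⌉₊ ≤ 1 / n := by
    refine (dTV_le hG (by omega) hd hy0.le hM _).trans ?_
    have hceil := Nat.le_ceil (9 * L)
    set t := ⌈9 * L⌉₊
    rw [← Real.log_le_log_iff (by positivity) (by positivity), Real.log_mul (by positivity)
      (by positivity), Real.log_pow, Real.log_sqrt hn0.le, one_div, Real.log_inv]
    have h2 : L * -(6 * Real.log y) = Real.log n := by
      rw [← hlogy, hL]; field_simp
    nlinarith
  have hτ : (mixingTime G d (1 / n) : ℝ) ≤ (⌈9 * L⌉₊ : ℝ) := by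
    exact_mod_cast Nat.sInf_le ht
  have hc := Nat.ceil_lt_add_one (show 0 ≤ 9 * L by linarith)
  nlinarith
end

section
/- Let ξ ∈ (0,1] be a constant. There exist constants C₀, C₁ > 0 (depending only on ξ) such that the following holds: if G is a d-regular graph on n vertices with d = n^ξ, and G satisfies the δ-small-set α-bipartite density condition for some α ∈ (√d, d] with α ≤ d/(C₀·(log d)²) and some δ ∈ (0,1] with δ ≥ C₀·α/d, then the standard mixing time satisfies τ_{1/3}(P) ≤ C₁·log n / log(d/α). -/
open Finset

/-- Two nonnegative functions in weak `ℓ²` have a product whose sum exceeds the product of the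
weak norms by at most a harmonic (logarithmic) factor. -/
lemma sum_mul_le_harmonic {ι : Type*} [DecidableEq ι] (f g : ι → ℝ) (D W : ℝ)
    (hD : 0 ≤ D) (hW : 0 ≤ W) (S : Finset ι)
    (hf : ∀ i ∈ S, 0 ≤ f i) (hg : ∀ i ∈ S, 0 ≤ g i)
    (hF : ∀ S' ⊆ S, ∑ i ∈ S', f i ≤ D * √(#S' : ℝ))
    (hG : ∀ S' ⊆ S, ∑ i ∈ S', g i ≤ W * √(#S' : ℝ)) :
    ∑ i ∈ S, f i * g i ≤ D * W * (harmonic #S : ℝ) := by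
  obtain ⟨k, hk⟩ : ∃ k, #S = k := ⟨_, rfl⟩
  induction k generalizing S with
  | zero => simp [Finset.card_eq_zero.mp hk]
  | succ k ih =>
    have hkpos : (0 : ℝ) < (k : ℝ) + 1 := by positivity
    have hcard : (#S : ℝ) = (k : ℝ) + 1 := by rw [hk]; push_cast; rfl
    obtain ⟨v, hv, hle⟩ : ∃ v ∈ S, f v * g v ≤ D * W / ((k : ℝ) + 1) := by
      by_contra! hlt
      have hne : S.Nonempty := by rw [← Finset.card_pos]; omega
      have h1 : ((k : ℝ) + 1) * √(D * W / ((k : ℝ) + 1)) < ∑ i ∈ S, √(f i) * √(g i) := by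
        rw [← hcard, ← nsmul_eq_mul, ← Finset.sum_const]
        refine Finset.sum_lt_sum_of_nonempty hne fun i hi => ?_
        rw [← Real.sqrt_mul (hf i hi), hcard]
        exact Real.sqrt_lt_sqrt (by positivity) (hlt i hi)
      have h2 : (∑ i ∈ S, √(f i) * √(g i)) ^ 2 ≤ (∑ i ∈ S, f i) * ∑ i ∈ S, g i := by
        refine (Finset.sum_mul_sq_le_sq_mul_sq S _ _).trans (le_of_eq ?_)
        congr 1 <;> refine Finset.sum_congr rfl fun i hi => Real.sq_sqrt ?_
        exacts [hf i hi, hg i hi]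
      have h3 : (∑ i ∈ S, f i) * ∑ i ∈ S, g i ≤ D * W * ((k : ℝ) + 1) := by
        calc _ ≤ (D * √(#S : ℝ)) * (W * √(#S : ℝ)) :=
              mul_le_mul (hF S subset_rfl) (hG S subset_rfl) (Finset.sum_nonneg hg)
                (by positivity)
          _ = D * W * (√(#S : ℝ) * √(#S : ℝ)) := by ring
          _ = _ := by rw [Real.mul_self_sqrt (by positivity), hcard]
      have h4 : (((k : ℝ) + 1) * √(D * W / ((k : ℝ) + 1))) ^ 2 = D * W * ((k : ℝ) + 1) := by
        rw [mul_pow, Real.sq_sqrt (by positivity)]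
        field_simp
      have h5 := pow_lt_pow_left₀ h1 (by positivity) two_ne_zero
      linarith
    have hsub := Finset.erase_subset v S
    have := ih (S.erase v) (fun i hi => hf i (hsub hi)) (fun i hi => hg i (hsub hi))
      (fun S' h => hF S' (h.trans hsub)) (fun S' h => hG S' (h.trans hsub))
      (by rw [Finset.card_erase_of_mem hv, hk]; rfl)
    rw [Finset.card_erase_of_mem hv, hk, Nat.add_sub_cancel] at this
    rw [← Finset.add_sum_erase S _ hv, hk, harmonic_succ]
    push_cast
    rw [div_eq_mul_inv] at hle
    linarith

section Graph

variable {n d : ℕ} {G : SimpleGraph (Fin n)} [DecidableRel G.Adj]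

lemma bipCount_eq_sum (S T : Finset (Fin n)) :
    (bipCount G S T : ℝ) = ∑ v ∈ T, ∑ u ∈ S, G.adjMatrix ℝ u v := by
  rw [Finset.sum_comm, bipCount, Finset.card_filter, Finset.sum_product]
  push_cast
  rfl

lemma walkMatrix_mulVec_apply (p : Fin n → ℝ) (v : Fin n) :
    (walkMatrix G d).mulVec p v = (d : ℝ)⁻¹ * ∑ u, G.adjMatrix ℝ v u * p u := by
  simp only [walkMatrix, Matrix.smul_mulVec, Pi.smul_apply, smul_eq_mul]
  rfl

lemma adjMatrix_nonneg (u v : Fin n) : 0 ≤ G.adjMatrix ℝ u v := by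
  rw [SimpleGraph.adjMatrix_apply]; split_ifs <;> norm_num

lemma sum_adjMatrix_row (hG : G.IsRegularOfDegree d) (v : Fin n) :
    ∑ u, G.adjMatrix ℝ v u = d := by
  have h := SimpleGraph.adjMatrix_mulVec_const_apply_of_regular (α := ℝ) (a := 1) hG (v := v)
  simpa [Matrix.mulVec, dotProduct] using h

lemma sum_adjMatrix_col (hG : G.IsRegularOfDegree d) (v : Fin n) :
    ∑ u, G.adjMatrix ℝ u v = d := by
  rw [← sum_adjMatrix_row hG v]
  refine Finset.sum_congr rfl fun u _ => ?_
  simp [SimpleGraph.adjMatrix_apply, G.adj_comm]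

lemma sum_walkMatrix_mulVec (T : Finset (Fin n)) (p : Fin n → ℝ) :
    ∑ v ∈ T, (walkMatrix G d).mulVec p v
      = (d : ℝ)⁻¹ * ∑ u, (∑ v ∈ T, G.adjMatrix ℝ v u) * p u := by
  simp only [walkMatrix_mulVec_apply, ← Finset.mul_sum, Finset.sum_mul]
  rw [Finset.sum_comm]

lemma walkMatrix_mulVec_mono {p q : Fin n → ℝ} (h : ∀ v, p v ≤ q v) (v : Fin n) :
    (walkMatrix G d).mulVec p v ≤ (walkMatrix G d).mulVec q v := by
  simp only [walkMatrix_mulVec_apply]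
  exact mul_le_mul_of_nonneg_left
    (Finset.sum_le_sum fun u _ => mul_le_mul_of_nonneg_left (h u) (adjMatrix_nonneg v u))
    (by positivity)

lemma walkMatrix_mulVec_const (hG : G.IsRegularOfDegree d) (hd : 0 < d) (c : ℝ) (v : Fin n) :
    (walkMatrix G d).mulVec (fun _ => c) v = c := by
  have : (d : ℝ) ≠ 0 := by positivity
  rw [walkMatrix_mulVec_apply, ← Finset.sum_mul, sum_adjMatrix_row hG]
  field_simp

lemma sum_univ_walkMatrix_mulVec (hG : G.IsRegularOfDegree d) (hd : 0 < d) (p : Fin n → ℝ) :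
    ∑ v, (walkMatrix G d).mulVec p v = ∑ v, p v := by
  have : (d : ℝ) ≠ 0 := by positivity
  simp only [sum_walkMatrix_mulVec, sum_adjMatrix_col hG, ← Finset.mul_sum]
  field_simp

lemma IsProbDist.walkMatrix_mulVec (hG : G.IsRegularOfDegree d) (hd : 0 < d) {p : Fin n → ℝ}
    (hp : IsProbDist p) : IsProbDist ((walkMatrix G d).mulVec p) := by
  refine ⟨fun v => ?_, by rw [sum_univ_walkMatrix_mulVec hG hd, hp.2]⟩
  have := walkMatrix_mulVec_mono (G := G) (d := d) hp.1 v
  rwa [walkMatrix_mulVec_const hG hd] at this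

lemma walkMatrix_pow_succ_mulVec (t : ℕ) (p : Fin n → ℝ) :
    (walkMatrix G d ^ (t + 1)).mulVec p
      = (walkMatrix G d).mulVec ((walkMatrix G d ^ t).mulVec p) := by
  rw [pow_succ', Matrix.mulVec_mulVec]

lemma IsProbDist.walkMatrix_pow_mulVec (hG : G.IsRegularOfDegree d) (hd : 0 < d)
    {p : Fin n → ℝ} (hp : IsProbDist p) (t : ℕ) :
    IsProbDist ((walkMatrix G d ^ t).mulVec p) := by
  induction t with
  | zero => simpa using hp
  | succ t ih =>
    rw [walkMatrix_pow_succ_mulVec]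
    exact ih.walkMatrix_mulVec hG hd

lemma IsProbDist.card_filter_lt_mul_le {p : Fin n → ℝ} (hp : IsProbDist p) (c : ℝ) :
    (#{v | c < p v} : ℝ) * c ≤ 1 := by
  rw [← hp.2, ← nsmul_eq_mul, ← Finset.sum_const]
  exact (Finset.sum_le_sum fun i hi => (Finset.mem_filter.mp hi).2.le).trans
    (Finset.sum_le_sum_of_subset_of_nonneg (Finset.subset_univ _) fun i _ _ => hp.1 i)

/-- The total variation distance is bounded through the one-sided excess on sets. -/
lemma IsProbDist.tvFromUniform_le (hn : 0 < n) {p : Fin n → ℝ} (hp : IsProbDist p) {ε : ℝ}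
    (h : ∀ T : Finset (Fin n), ∑ v ∈ T, p v ≤ (#T : ℝ) / n + ε) : tvFromUniform p ≤ ε := by
  have hn' : (n : ℝ) ≠ 0 := by positivity
  have h0 : ∑ v, (p v - 1 / (n : ℝ)) = 0 := by
    simp only [Finset.sum_sub_distrib, hp.2, Finset.sum_const, Finset.card_univ, Fintype.card_fin,
      nsmul_eq_mul]
    field_simp
    ring
  have h1 : ∑ v, |p v - 1 / (n : ℝ)|
      = 2 * ∑ v ∈ {v | 1 / (n : ℝ) < p v}, (p v - 1 / (n : ℝ)) := by
    have : ∀ v, |p v - 1 / (n : ℝ)|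
        = 2 * (if 1 / (n : ℝ) < p v then p v - 1 / (n : ℝ) else 0) - (p v - 1 / (n : ℝ)) := by
      intro v
      split_ifs with hv
      · rw [abs_of_pos (by linarith)]; ring
      · rw [abs_of_nonpos (by linarith)]; ring
    rw [Finset.sum_congr rfl fun v _ => this v, Finset.sum_sub_distrib, h0, sub_zero,
      ← Finset.mul_sum, Finset.sum_filter]
  have h2 := h {v | 1 / (n : ℝ) < p v}
  rw [tvFromUniform, h1, Finset.sum_sub_distrib, Finset.sum_const, nsmul_eq_mul]
  rw [mul_one_div]
  linarith

/-- One step of the walk contracts the part of a distribution above the level `d / (α n)`, in the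
weak `ℓ²` norm. -/
lemma excess_step {α δ : ℝ} (hG : G.IsRegularOfDegree d) (hd : 0 < d) (hn : 0 < n) (hα : 0 < α)
    (hδ : α / d ≤ δ) (hE : SmallSetBipDensity G d α δ) {p : Fin n → ℝ} (hp : IsProbDist p)
    {W : ℝ} (hW : 0 ≤ W)
    (hpW : ∀ T : Finset (Fin n), ∑ v ∈ T, max (p v - d / (α * n)) 0 ≤ W * √(#T : ℝ))
    (T : Finset (Fin n)) :
    ∑ v ∈ T, max ((walkMatrix G d).mulVec p v - d / (α * n)) 0
      ≤ 2 * α * (1 + Real.log n) / d * W * √(#T : ℝ) := by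
  have hd' : (0 : ℝ) < d := by positivity
  have hn' : (0 : ℝ) < n := by positivity
  set c : ℝ := d / (α * n) with hc
  have hcpos : 0 < c := by positivity
  have hcinv : 1 / c = α / d * n := by rw [hc]; field_simp
  set h : Fin n → ℝ := fun v => max (p v - c) 0 with hh
  set q := (walkMatrix G d).mulVec p with hq
  have hqp : IsProbDist q := hp.walkMatrix_mulVec hG hd
  set H : Finset (Fin n) := {v | c < p v} with hH
  set K : Finset (Fin n) := {v | c < q v} with hK
  have small : ∀ {r : Fin n → ℝ}, IsProbDist r → ∀ S ⊆ ({v | c < r v} : Finset (Fin n)),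
      (#S : ℝ) ≤ α / d * n := by
    intro r hr S hS
    have h1 := hr.card_filter_lt_mul_le c
    rw [← le_div_iff₀ hcpos, hcinv] at h1
    exact (Nat.cast_le.mpr (Finset.card_le_card hS)).trans h1
  have hstep : ∀ v, max (q v - c) 0 ≤ (walkMatrix G d).mulVec h v := by
    intro v
    have hnn := walkMatrix_mulVec_mono (G := G) (d := d) (p := fun _ => 0) (q := h)
      (fun u => le_max_right _ _) v
    rw [walkMatrix_mulVec_const hG hd] at hnn
    refine max_le ?_ hnn
    have := walkMatrix_mulVec_mono (G := G) (d := d) (p := p) (q := (fun _ => c) + h)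
      (fun u => by simp only [hh, Pi.add_apply]; linarith [le_max_left (p u - c) 0]) v
    rw [Matrix.mulVec_add, Pi.add_apply, walkMatrix_mulVec_const hG hd] at this
    linarith
  set T' := T ∩ K with hT'
  have hT'card : (#T' : ℝ) ≤ α / d * n := small hqp T' Finset.inter_subset_right
  have e1 : ∑ v ∈ T, max (q v - c) 0 = ∑ v ∈ T', max (q v - c) 0 := by
    refine (Finset.sum_subset Finset.inter_subset_left fun v hvT hv => max_eq_right ?_).symm
    have : ¬ c < q v := fun hlt => hv (by simp [hK, hvT, hlt])
    linarith
  have e2 : ∑ u, (∑ v ∈ T', G.adjMatrix ℝ v u) * h u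
      = ∑ u ∈ H, (∑ v ∈ T', G.adjMatrix ℝ v u) * h u := by
    refine (Finset.sum_subset (Finset.subset_univ _) fun v _ hv => ?_).symm
    have : ¬ c < p v := fun hlt => hv (by simp [hH, hlt])
    rw [hh]
    simp only
    rw [max_eq_right (by linarith), mul_zero]
  have key : ∑ u ∈ H, (∑ v ∈ T', G.adjMatrix ℝ v u) * h u
      ≤ (2 * α * √(#T' : ℝ)) * W * (harmonic #H : ℝ) := by
    refine sum_mul_le_harmonic _ _ _ _ (by positivity) hW H
      (fun u _ => Finset.sum_nonneg fun v _ => adjMatrix_nonneg v u)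
      (fun u _ => le_max_right _ _) (fun S hS => ?_) (fun S _ => hpW S)
    rw [← bipCount_eq_sum]
    have hScard := small hp S hS
    have hδn : α / d * n ≤ δ * n := by gcongr
    refine (hE T' S (hT'card.trans hδn) (hScard.trans hδn)).trans ?_
    rw [Real.sqrt_mul (by positivity)]
    have a1 : √(#T' : ℝ) * √(#S : ℝ) ≤ α / d * n := by
      rw [← Real.sqrt_mul (by positivity)]
      refine Real.sqrt_le_iff.mpr ⟨by positivity, ?_⟩
      rw [sq]
      exact mul_le_mul hT'card hScard (by positivity) (by positivity)
    have a2 : (d : ℝ) * #T' * #S / n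
        = d / n * (√(#T' : ℝ) * √(#S : ℝ)) * (√(#T' : ℝ) * √(#S : ℝ)) := by
      have b1 := Real.mul_self_sqrt (show (0 : ℝ) ≤ #T' by positivity)
      have b2 := Real.mul_self_sqrt (show (0 : ℝ) ≤ #S by positivity)
      calc (d : ℝ) * #T' * #S / n
          = d / n * ((√(#T' : ℝ) * √(#T' : ℝ)) * (√(#S : ℝ) * √(#S : ℝ))) := by
            rw [b1, b2]; ring
        _ = _ := by ring
    have a3 : (d : ℝ) / n * (√(#T' : ℝ) * √(#S : ℝ)) ≤ α := by
      calc _ ≤ (d : ℝ) / n * (α / d * n) := by gcongr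
        _ = α := by field_simp
    rw [a2]
    have := mul_le_mul_of_nonneg_right a3 (show 0 ≤ √(#T' : ℝ) * √(#S : ℝ) by positivity)
    linarith
  have hharm : (harmonic #H : ℝ) ≤ 1 + Real.log n := by
    rcases Nat.eq_zero_or_pos #H with h0 | h0
    · rw [h0]
      have := Real.log_nonneg (show (1 : ℝ) ≤ n by exact_mod_cast hn)
      simp only [harmonic_zero, Rat.cast_zero]
      linarith
    · have hle : #H ≤ n := (Finset.card_le_univ H).trans_eq (Fintype.card_fin n)
      refine (harmonic_le_one_add_log _).trans ?_
      gcongr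
  have hlog : 0 ≤ 1 + Real.log n := by
    have := Real.log_nonneg (show (1 : ℝ) ≤ n by exact_mod_cast hn)
    linarith
  calc ∑ v ∈ T, max (q v - c) 0 = ∑ v ∈ T', max (q v - c) 0 := e1
    _ ≤ ∑ v ∈ T', (walkMatrix G d).mulVec h v := Finset.sum_le_sum fun v _ => hstep v
    _ = (d : ℝ)⁻¹ * ∑ u ∈ H, (∑ v ∈ T', G.adjMatrix ℝ v u) * h u := by
        rw [sum_walkMatrix_mulVec, e2]
    _ ≤ (d : ℝ)⁻¹ * ((2 * α * √(#T : ℝ)) * W * (1 + Real.log n)) := by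
        refine mul_le_mul_of_nonneg_left (key.trans ?_) (by positivity)
        have : √(#T' : ℝ) ≤ √(#T : ℝ) :=
          Real.sqrt_le_sqrt (by exact_mod_cast Finset.card_le_card Finset.inter_subset_left)
        calc _ ≤ 2 * α * √(#T' : ℝ) * W * (1 + Real.log n) := by gcongr
          _ ≤ _ := by gcongr
    _ = _ := by ring

lemma excess_iterate {α δ : ℝ} (hG : G.IsRegularOfDegree d) (hd : 0 < d) (hn : 0 < n)
    (hα : 0 < α) (hδ : α / d ≤ δ) (hE : SmallSetBipDensity G d α δ) {p : Fin n → ℝ}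
    (hp : IsProbDist p) (t : ℕ) (T : Finset (Fin n)) :
    ∑ v ∈ T, max ((walkMatrix G d ^ t).mulVec p v - d / (α * n)) 0
      ≤ (2 * α * (1 + Real.log n) / d) ^ t * √(#T : ℝ) := by
  have hlog := Real.log_nonneg (show (1 : ℝ) ≤ n by exact_mod_cast hn)
  induction t generalizing T with
  | zero =>
    simp only [pow_zero, Matrix.one_mulVec, one_mul]
    rcases T.eq_empty_or_nonempty with rfl | hT
    · simp
    have hc : (0 : ℝ) ≤ d / (α * n) := by positivity
    calc _ ≤ ∑ v ∈ T, p v := Finset.sum_le_sum fun v _ =>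
          max_le (by linarith) (hp.1 v)
      _ ≤ ∑ v, p v := Finset.sum_le_sum_of_subset_of_nonneg (Finset.subset_univ _)
          fun v _ _ => hp.1 v
      _ = 1 := hp.2
      _ ≤ _ := Real.one_le_sqrt.mpr (by exact_mod_cast hT.card_pos)
  | succ t ih =>
    rw [walkMatrix_pow_succ_mulVec]
    refine (excess_step hG hd hn hα hδ hE (hp.walkMatrix_pow_mulVec hG hd t)
      (by positivity) ih T).trans (le_of_eq ?_)
    ring

/-- A bounded mass distribution sends little more than the expected number of edges to a small
set. -/
lemma sum_degree_mul_le_of_small {α δ : ℝ} (hd : 0 < d) (hn : 0 < n) (hα : 1 ≤ α) (hdn : d ≤ n)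
    (hδ : 2 * α / d ≤ δ) (hE : SmallSetBipDensity G d α δ) {q : Fin n → ℝ} (hq0 : ∀ v, 0 ≤ q v)
    (hq1 : ∑ v, q v ≤ 1) (hqle : ∀ v, q v ≤ d / (α * n)) (T : Finset (Fin n))
    (hT : (#T : ℝ) ≤ δ * n) :
    ∑ u, (∑ v ∈ T, G.adjMatrix ℝ v u) * q u ≤ d * #T / n + 2 * √(d * α * δ) := by
  have hd' : (0 : ℝ) < d := by positivity
  have hn' : (0 : ℝ) < n := by positivity
  have hδ0 : 0 < δ := lt_of_lt_of_le (by positivity) hδ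
  have hdn' : (d : ℝ) ≤ n := by exact_mod_cast hdn
  set e : Fin n → ℝ := fun u => ∑ v ∈ T, G.adjMatrix ℝ v u
  set D : ℝ := d * #T / n with hD
  set c : ℝ := √(d * α * δ) with hc
  have hcpos : 0 < c := Real.sqrt_pos.mpr (by positivity)
  have hc2 : c ^ 2 = d * α * δ := Real.sq_sqrt (by positivity)
  set B : Finset (Fin n) := {u | D + c < e u} with hB
  have excess : ∀ S : Finset (Fin n), (#S : ℝ) ≤ δ * n →
      ∑ u ∈ S, (e u - D) ≤ α * √(#S * (δ * n)) := by
    intro S hS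
    have h1 := hE T S hT hS
    rw [bipCount_eq_sum] at h1
    have h2 : √((#T : ℝ) * #S) ≤ √(#S * (δ * n)) := by
      refine Real.sqrt_le_sqrt ?_
      rw [mul_comm]
      gcongr
    have h3 := mul_le_mul_of_nonneg_left h2 (show 0 ≤ α by linarith)
    rw [Finset.sum_sub_distrib, Finset.sum_const, nsmul_eq_mul]
    have h4 : (d : ℝ) * #T * #S / n = #S * D := by rw [hD]; ring
    linarith
  have smallS : ∀ S ⊆ B, (#S : ℝ) ≤ δ * n → (#S : ℝ) ≤ α / d * n := by
    intro S hS hcard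
    rcases S.eq_empty_or_nonempty with rfl | hne
    · simp; positivity
    have hpos : (0 : ℝ) < #S := by exact_mod_cast hne.card_pos
    have h1 : (#S : ℝ) * c ≤ ∑ u ∈ S, (e u - D) := by
      rw [← nsmul_eq_mul, ← Finset.sum_const]
      refine Finset.sum_le_sum fun u hu => ?_
      have := (Finset.mem_filter.mp (hS hu)).2
      linarith
    have h2 := h1.trans (excess S hcard)
    have h3 := pow_le_pow_left₀ (by positivity) h2 2
    rw [mul_pow, mul_pow, hc2, Real.sq_sqrt (by positivity)] at h3
    rw [div_mul_eq_mul_div, le_div_iff₀ hd']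
    have hpos' : 0 < (#S : ℝ) * α * δ := by positivity
    refine le_of_mul_le_mul_left ?_ hpos'
    linarith
  have hαn : 1 ≤ α / d * n := by
    rw [div_mul_eq_mul_div, le_div_iff₀ hd']
    nlinarith
  have hBcard : (#B : ℝ) ≤ α / d * n := by
    by_contra! hlt
    have hfl := Nat.floor_le (show 0 ≤ α / d * n by positivity)
    have hlt' := Nat.lt_floor_add_one (α / d * n)
    obtain ⟨S, hSB, hS⟩ := Finset.exists_subset_card_eq
      (show ⌊α / d * n⌋₊ + 1 ≤ #B from (Nat.floor_lt (by positivity)).mpr hlt)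
    have hS' : (#S : ℝ) = ⌊α / d * n⌋₊ + 1 := by rw [hS]; push_cast; rfl
    have hδn : 2 * α / d * n ≤ δ * n := by gcongr
    have : (#S : ℝ) ≤ δ * n := by
      rw [hS']
      have : 2 * α / d * n = 2 * (α / d * n) := by ring
      linarith
    have := smallS S hSB this
    linarith
  have hδn' : α / d * n ≤ δ * n := by
    have : α / d ≤ 2 * α / d := by gcongr; linarith
    have := this.trans hδ
    gcongr
  have hBex : d / (α * n) * ∑ u ∈ B, (e u - D) ≤ c := by
    have h1 : ∑ u ∈ B, (e u - D) ≤ α * (n / d * c) := by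
      refine (excess B (hBcard.trans hδn')).trans ?_
      have : √((#B : ℝ) * (δ * n)) ≤ n / d * c := by
        refine Real.sqrt_le_iff.mpr ⟨by positivity, ?_⟩
        rw [mul_pow, hc2]
        calc (#B : ℝ) * (δ * n) ≤ α / d * n * (δ * n) := by gcongr
          _ = _ := by field_simp
      gcongr
    calc _ ≤ d / (α * n) * (α * (n / d * c)) := by gcongr
      _ = c := by field_simp
  have hpt : ∀ u, e u * q u ≤ (D + c) * q u + if u ∈ B then d / (α * n) * (e u - D) else 0 := by
    intro u
    split_ifs with hu
    · have h1 : D + c < e u := (Finset.mem_filter.mp hu).2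
      have h2 := mul_le_mul_of_nonneg_right (hqle u) (show 0 ≤ e u - D by linarith)
      have h3 := mul_nonneg hcpos.le (hq0 u)
      linarith
    · have h1 : ¬ D + c < e u := fun hlt => hu (by simp [hB, hlt])
      have := mul_le_mul_of_nonneg_right (not_lt.mp h1) (hq0 u)
      linarith
  calc ∑ u, e u * q u
      ≤ ∑ u, ((D + c) * q u + if u ∈ B then d / (α * n) * (e u - D) else 0) :=
        Finset.sum_le_sum fun u _ => hpt u
    _ = (D + c) * ∑ u, q u + d / (α * n) * ∑ u ∈ B, (e u - D) := by
        rw [Finset.sum_add_distrib, ← Finset.mul_sum, Finset.sum_ite_mem, Finset.univ_inter,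
          ← Finset.mul_sum]
    _ ≤ (D + c) * 1 + c := by gcongr
    _ = _ := by ring

lemma sum_degree_mul_le {α δ : ℝ} (hd : 0 < d) (hn : 0 < n) (hα : 1 ≤ α) (hdn : d ≤ n)
    (hδ : 2 * α / d ≤ δ) (hδ1 : δ ≤ 1) (hE : SmallSetBipDensity G d α δ) {q : Fin n → ℝ}
    (hq0 : ∀ v, 0 ≤ q v) (hq1 : ∑ v, q v ≤ 1) (hqle : ∀ v, q v ≤ d / (α * n))
    (T : Finset (Fin n)) :
    ∑ u, (∑ v ∈ T, G.adjMatrix ℝ v u) * q u ≤ d * #T / n + 6 * √(d * α / δ) := by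
  have hd' : (0 : ℝ) < d := by positivity
  have hn' : (0 : ℝ) < n := by positivity
  have hδ0 : 0 < δ := lt_of_lt_of_le (by positivity) hδ
  have hdn' : (d : ℝ) ≤ n := by exact_mod_cast hdn
  have hδn : 1 ≤ δ * n := by
    calc (1 : ℝ) ≤ 2 * α / d * d := by field_simp; linarith
      _ ≤ δ * n := by gcongr
  set m : ℕ := ⌊δ * n⌋₊ with hm
  have hm1 : 1 ≤ m := Nat.le_floor (by exact_mod_cast hδn)
  have hmle : (m : ℝ) ≤ δ * n := Nat.floor_le (by positivity)
  have hm2 : δ * n / 2 ≤ m := by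
    have h1 := Nat.lt_floor_add_one (δ * n)
    have h2 : (1 : ℝ) ≤ m := by exact_mod_cast hm1
    linarith
  have hm0 : (0 : ℝ) < m := by exact_mod_cast hm1
  set X : ℝ := 2 * √(d * α * δ) with hX
  have chunk : ∀ T : Finset (Fin n), ∑ u, (∑ v ∈ T, G.adjMatrix ℝ v u) * q u
      ≤ d * #T / n + ((#T : ℝ) / m + 1) * X := by
    intro T
    induction T using Finset.strongInduction with
    | H T ih =>
      rcases le_or_gt #T m with hle | hgt
      · have := sum_degree_mul_le_of_small hd hn hα hdn hδ hE hq0 hq1 hqle T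
          ((Nat.cast_le.mpr hle).trans hmle)
        have h2 : 0 ≤ (#T : ℝ) / m * X := by positivity
        linarith
      · obtain ⟨S, hST, hS⟩ := Finset.exists_subset_card_eq hgt.le
        have h1 := sum_degree_mul_le_of_small hd hn hα hdn hδ hE hq0 hq1 hqle S
          (by rw [hS]; exact hmle)
        have hne : S.Nonempty := by rw [← Finset.card_pos]; omega
        have h2 := ih (T \ S) (Finset.sdiff_ssubset hST hne)
        have h3 : (#(T \ S) : ℝ) = #T - m := by
          rw [Finset.cast_card_sdiff hST, hS]
        have h4 : ∑ u, (∑ v ∈ T, G.adjMatrix ℝ v u) * q u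
            = ∑ u, (∑ v ∈ T \ S, G.adjMatrix ℝ v u) * q u
              + ∑ u, (∑ v ∈ S, G.adjMatrix ℝ v u) * q u := by
          rw [← Finset.sum_add_distrib]
          refine Finset.sum_congr rfl fun u _ => ?_
          rw [← add_mul, Finset.sum_sdiff hST]
        rw [h3] at h2
        rw [hS] at h1
        rw [h4]
        have h5 : (d : ℝ) * (#T - m) / n + ((#T - m : ℝ) / m + 1) * X + (d * m / n + X)
            = d * #T / n + ((#T : ℝ) / m + 1) * X := by
          field_simp
          ring
        linarith
  refine (chunk T).trans ?_
  have hTn : (#T : ℝ) ≤ n := by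
    exact_mod_cast (Finset.card_le_univ T).trans_eq (Fintype.card_fin n)
  have h1 : (#T : ℝ) / m + 1 ≤ 3 / δ := by
    have a : (#T : ℝ) / m ≤ 2 / δ := by
      rw [div_le_div_iff₀ hm0 hδ0]
      nlinarith
    have b : 1 ≤ 1 / δ := by rw [le_div_iff₀ hδ0]; linarith
    have : 3 / δ = 2 / δ + 1 / δ := by ring
    linarith
  have h2 : √(d * α * δ) = δ * √(d * α / δ) := by
    have : (d : ℝ) * α * δ = δ ^ 2 * (d * α / δ) := by field_simp
    rw [this, Real.sqrt_mul (by positivity), Real.sqrt_sq hδ0.le]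
  have h3 : ((#T : ℝ) / m + 1) * X ≤ 3 / δ * X := by gcongr
  have h4 : 3 / δ * X = 6 * √(d * α / δ) := by
    rw [hX, h2]; field_simp; norm_num
  linarith

/-- Quantitative convergence: the excess above level `d / (α n)` decays geometrically, and one
further step nearly equidistributes what lies below. -/
lemma dTV_succ_le {α δ : ℝ} (hG : G.IsRegularOfDegree d) (hd : 0 < d) (hn : 0 < n) (hα : 1 ≤ α)
    (hdn : d ≤ n) (hδ : 2 * α / d ≤ δ) (hδ1 : δ ≤ 1) (hE : SmallSetBipDensity G d α δ) (t : ℕ) :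
    dTV G d (t + 1)
      ≤ 6 * √(α / (d * δ)) + (2 * α * (1 + Real.log n) / d) ^ t * √(n : ℝ) := by
  have hd' : (0 : ℝ) < d := by positivity
  have hn' : (0 : ℝ) < n := by positivity
  have hδ0 : 0 < δ := lt_of_lt_of_le (by positivity) hδ
  have hlog := Real.log_nonneg (show (1 : ℝ) ≤ n by exact_mod_cast hn)
  refine Real.sSup_le ?_ (by positivity)
  rintro x ⟨p₀, hp₀, rfl⟩
  refine (hp₀.walkMatrix_pow_mulVec hG hd (t + 1)).tvFromUniform_le hn fun T => ?_
  rw [walkMatrix_pow_succ_mulVec]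
  set p := (walkMatrix G d ^ t).mulVec p₀ with hp
  have hpp : IsProbDist p := hp₀.walkMatrix_pow_mulVec hG hd t
  set c : ℝ := d / (α * n) with hc
  have hc0 : 0 ≤ c := by positivity
  set h : Fin n → ℝ := fun v => max (p v - c) 0 with hh
  set q : Fin n → ℝ := fun v => min (p v) c with hq
  have hsplit : p = q + h := by
    funext v
    simp only [hq, hh, Pi.add_apply]
    rcases le_total (p v) c with hv | hv
    · rw [min_eq_left hv, max_eq_right (by linarith), add_zero]
    · rw [min_eq_right hv, max_eq_left (by linarith)]; ring
  have hα0 : 0 < α := by linarith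
  have hδ' : α / d ≤ δ := le_trans (by gcongr; linarith) hδ
  have hhmass : ∑ v ∈ T, (walkMatrix G d).mulVec h v
      ≤ (2 * α * (1 + Real.log n) / d) ^ t * √(n : ℝ) := by
    have h0 : ∀ v, 0 ≤ (walkMatrix G d).mulVec h v := fun v => by
      have := walkMatrix_mulVec_mono (G := G) (d := d) (p := fun _ => 0) (q := h)
        (fun u => le_max_right _ _) v
      rwa [walkMatrix_mulVec_const hG hd] at this
    have h1 := excess_iterate hG hd hn hα0 hδ' hE hp₀ t Finset.univ
    rw [Finset.card_univ, Fintype.card_fin] at h1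
    refine (Finset.sum_le_sum_of_subset_of_nonneg (Finset.subset_univ T)
      fun v _ _ => h0 v).trans ?_
    rw [sum_univ_walkMatrix_mulVec hG hd]
    exact h1
  have hqmass : ∑ v ∈ T, (walkMatrix G d).mulVec q v ≤ (#T : ℝ) / n + 6 * √(α / (d * δ)) := by
    have h1 := sum_degree_mul_le (q := q) hd hn hα hdn hδ hδ1 hE
      (fun v => le_min (hpp.1 v) hc0)
      ((Finset.sum_le_sum fun v _ => min_le_left _ _).trans_eq hpp.2)
      (fun v => min_le_right _ _) T
    rw [sum_walkMatrix_mulVec]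
    have h2 : √(d * α / δ) = d * √(α / (d * δ)) := by
      have : (d : ℝ) * α / δ = d ^ 2 * (α / (d * δ)) := by field_simp
      rw [this, Real.sqrt_mul (by positivity), Real.sqrt_sq hd'.le]
    calc _ ≤ (d : ℝ)⁻¹ * (d * #T / n + 6 * √(d * α / δ)) := by gcongr
      _ = ((d : ℝ)⁻¹ * d) * (#T / n + 6 * √(α / (d * δ))) := by rw [h2]; ring
      _ = _ := by rw [inv_mul_cancel₀ hd'.ne', one_mul]
  rw [hsplit, Matrix.mulVec_add]
  simp only [Pi.add_apply]
  rw [Finset.sum_add_distrib]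
  linarith

end Graph

/-- small-set bipartite density implies `τ_{1/3}(P) ≲ log n / log(d/α)`. -/
theorem mixing_time_upper_bound_of_small_set_bipartite_density
    (ξ : ℝ) (hξ0 : 0 < ξ) (hξ1 : ξ ≤ 1) :
    ∃ C₀ C₁ : ℝ, 0 < C₀ ∧ 0 < C₁ ∧
      ∀ (n d : ℕ) (G : SimpleGraph (Fin n)) [DecidableRel G.Adj] (α δ : ℝ),
        G.IsRegularOfDegree d →
        (d : ℝ) = (n : ℝ) ^ ξ →
        Real.sqrt d < α → α ≤ d →
        α ≤ d / (C₀ * Real.log d ^ 2) →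
        0 < δ → δ ≤ 1 → C₀ * α / d ≤ δ →
        SmallSetBipDensity G d α δ →
        (mixingTime G d (1 / 3) : ℝ) ≤ C₁ * Real.log n / Real.log (d / α) := by
  refine ⟨900 / ξ ^ 2, 4, by positivity, by norm_num, ?_⟩
  intro n d G _ α δ hG hdξ hα hαd hαlog hδ0 hδ1 hδ hE
  have hsq : 0 ≤ √(d : ℝ) := Real.sqrt_nonneg _
  have hα0 : 0 < α := by linarith
  have hd' : (0 : ℝ) < d := by linarith
  have hd : 0 < d := by exact_mod_cast hd'
  have hd1 : (1 : ℝ) ≤ d := by exact_mod_cast hd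
  have hα1 : 1 ≤ α := le_trans (Real.one_le_sqrt.mpr hd1) hα.le
  have hn : 0 < n := by
    rcases Nat.eq_zero_or_pos n with rfl | h
    · rw [Nat.cast_zero, Real.zero_rpow hξ0.ne'] at hdξ; linarith
    · exact h
  have hn' : (0 : ℝ) < n := by positivity
  have hn1 : (1 : ℝ) ≤ n := by exact_mod_cast hn
  have hdn' : (d : ℝ) ≤ n := by
    rw [hdξ]
    simpa using Real.rpow_le_rpow_of_exponent_le hn1 hξ1
  have hdn : d ≤ n := by exact_mod_cast hdn'
  have hlogd : Real.log d = ξ * Real.log n := by rw [hdξ, Real.log_rpow hn']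
  set C : ℝ := 900 / ξ ^ 2 with hC
  have hC900 : 900 ≤ C := by
    rw [hC, le_div_iff₀ (by positivity)]
    nlinarith
  set R : ℝ := d / α with hR
  have hR0 : 0 < R := by positivity
  have hRC : C ≤ R := by
    rw [hR, le_div_iff₀ hα0]
    have := hδ.trans hδ1
    rwa [div_le_one hd'] at this
  have hRd : R ≤ d := div_le_self hd'.le hα1
  have hd900 : (900 : ℝ) ≤ d := by linarith
  have hlogd1 : 1 ≤ Real.log d := by
    rw [Real.le_log_iff_exp_le hd']
    linarith [Real.exp_one_lt_d9]
  have hlogn : 0 < Real.log n := Real.log_pos (by linarith)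
  have hlogR : 0 < Real.log R := Real.log_pos (by linarith)
  have hlogRn : Real.log R ≤ Real.log n := Real.log_le_log hR0 (by linarith)
  have hRlog : C * Real.log d ^ 2 ≤ R := by
    rw [le_div_iff₀ (by positivity)] at hαlog
    rw [hR, le_div_iff₀ hα0]
    linarith
  set ρ : ℝ := 2 * α * (1 + Real.log n) / d with hρ
  have hρ0 : 0 ≤ ρ := by positivity
  have hρR : ρ ^ 2 ≤ 1 / R := by
    have e1 : 1 + Real.log n ≤ 2 * Real.log d / ξ := by
      rw [hlogd] at hlogd1 ⊢
      have : 2 * (ξ * Real.log n) / ξ = 2 * Real.log n := by field_simp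
      rw [this]
      nlinarith
    have e2 : ρ = 2 * (1 + Real.log n) / R := by rw [hρ, hR]; field_simp
    have e3 : (2 * (1 + Real.log n)) ^ 2 ≤ R := by
      calc (2 * (1 + Real.log n)) ^ 2 ≤ (2 * (2 * Real.log d / ξ)) ^ 2 := by gcongr
        _ = 16 / ξ ^ 2 * Real.log d ^ 2 := by ring
        _ ≤ C * Real.log d ^ 2 := by rw [hC]; gcongr; norm_num
        _ ≤ R := hRlog
    rw [e2, div_pow, div_le_div_iff₀ (by positivity) hR0]
    nlinarith
  set t : ℕ := ⌈2 * Real.log n / Real.log R⌉₊ with ht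
  have hρt : ρ ^ t ≤ 1 / n := by
    have h1 : 2 * Real.log n ≤ t * Real.log R := by
      rw [← div_le_iff₀ hlogR]
      exact Nat.le_ceil _
    have h2 : (n : ℝ) ^ 2 ≤ R ^ t := by
      rw [← Real.log_le_log_iff (by positivity) (by positivity), Real.log_pow, Real.log_pow]
      exact_mod_cast h1
    refine le_of_sq_le_sq ?_ (by positivity)
    calc (ρ ^ t) ^ 2 = (ρ ^ 2) ^ t := by rw [← pow_mul, ← pow_mul, mul_comm]
      _ ≤ (1 / R) ^ t := by gcongr
      _ = 1 / R ^ t := by rw [div_pow, one_pow]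
      _ ≤ 1 / (n : ℝ) ^ 2 := by gcongr
      _ = (1 / (n : ℝ)) ^ 2 := by rw [div_pow, one_pow]
  have hdecay : ρ ^ t * √(n : ℝ) ≤ 1 / 30 := by
    have h1 : (30 : ℝ) ≤ √(n : ℝ) := Real.le_sqrt_of_sq_le (by linarith)
    calc ρ ^ t * √(n : ℝ) ≤ 1 / n * √(n : ℝ) := by gcongr
      _ = 1 / √(n : ℝ) := by
        rw [div_mul_eq_mul_div, one_mul, Real.sqrt_div_self']
      _ ≤ 1 / 30 := by gcongr
  have hflat : √(α / (d * δ)) ≤ 1 / 30 := by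
    refine Real.sqrt_le_iff.mpr ⟨by norm_num, ?_⟩
    rw [div_le_iff₀ (by positivity)]
    rw [div_le_iff₀ hd'] at hδ
    nlinarith
  have hδ2 : 2 * α / d ≤ δ := le_trans (by gcongr; linarith) hδ
  have hmix : mixingTime G d (1 / 3) ≤ t + 1 := by
    refine Nat.sInf_le ?_
    have := dTV_succ_le hG hd hn hα1 hdn hδ2 hδ1 hE t
    simp only [Set.mem_ofPred_eq]
    linarith
  have htle : (t : ℝ) < 2 * Real.log n / Real.log R + 1 := Nat.ceil_lt_add_one (by positivity)
  have hone : 1 ≤ Real.log n / Real.log R := by rw [le_div_iff₀ hlogR]; linarith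
  have hmix' : (mixingTime G d (1 / 3) : ℝ) ≤ t + 1 := by exact_mod_cast hmix
  have e1 : 2 * Real.log n / Real.log R = 2 * (Real.log n / Real.log R) := by ring
  have e2 : 4 * Real.log n / Real.log R = 4 * (Real.log n / Real.log R) := by ring
  rw [e1] at htle
  rw [e2]
  linarith
end
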